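/- Let G=(V,E) be a finite weighted graph, 0 < ε ≤ 1, B ⊆ V, and S a nonempty proper subset of B with T = B∖S. Suppose e(S,T) ≤ (ε/3)·e(S,V∖B) and φ(S) ≥ (1+ε)·φ(B). Then φ(T) ≤ φ(B). -/

import Mathlib

open Finset

/-- Weighted degree of a vertex. -/
noncomputable def deg {V : Type*} [Fintype V] (w : V → V → ℝ) (v : V) : ℝ :=
  ∑ u, w v u

/-- Volume of a set of vertices. -/
noncomputable def vol {V : Type*} [Fintype V] (w : V → V → ℝ) (S : Finset V) : ℝ :=
  ∑ v ∈ S, deg w v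

/-- Total weight of edges from `S` to `T \ S`. -/
noncomputable def eW {V : Type*} [DecidableEq V] (w : V → V → ℝ) (S T : Finset V) : ℝ :=
  ∑ u ∈ S, ∑ v ∈ T \ S, w u v

/-- Conductance of `S` in `G`. -/
noncomputable def phi {V : Type*} [Fintype V] [DecidableEq V] (w : V → V → ℝ)
    (S : Finset V) : ℝ :=
  eW w S Finset.univ / vol w S

/-- Volume of `S ⊆ P` inside the induced subgraph `G[P]`. -/
noncomputable def volIn {V : Type*} [DecidableEq V] (w : V → V → ℝ) (P S : Finset V) : ℝ :=
  ∑ v ∈ S, ∑ u ∈ P, w v u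

/-- `φ(G[P]) ≥ a` : every nonempty proper `S ⊊ P` with at most half of the induced volume
has induced conductance at least `a` (stated multiplicatively). -/
def inCondGE {V : Type*} [DecidableEq V] (w : V → V → ℝ) (P : Finset V) (a : ℝ) : Prop :=
  ∀ S : Finset V, S ⊆ P → S.Nonempty → S ≠ P →
    volIn w P S ≤ volIn w P P / 2 → a * volIn w P S ≤ eW w S P

/-- `ρ(k)`: the minimum over families of `k` pairwise disjoint nonempty subsets of the
maximum conductance. -/
noncomputable def rho {V : Type*} [Fintype V] [DecidableEq V] (w : V → V → ℝ) (k : ℕ) : ℝ :=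
  sInf { r | ∃ A : Fin k → Finset V, (∀ i, (A i).Nonempty) ∧
    (∀ i j, i ≠ j → Disjoint (A i) (A j)) ∧ r = ⨆ i, phi w (A i) }

/-- The normalized Laplacian `I - D^{-1/2} A D^{-1/2}`. -/
noncomputable def normLap {V : Type*} [Fintype V] [DecidableEq V] (w : V → V → ℝ) : Matrix V V ℝ :=
  1 - Matrix.of fun u v => w u v / (Real.sqrt (deg w u) * Real.sqrt (deg w v))

/-- `lam w k` is the `k`-th smallest eigenvalue (1-indexed) of the normalized Laplacian. -/
noncomputable def lam {V : Type*} [Fintype V] [DecidableEq V] (w : V → V → ℝ) (k : ℕ) : ℝ :=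
  if h : (normLap w).IsHermitian then
    ((Finset.univ.val.map h.eigenvalues).sort (· ≤ ·)).getD (k - 1) 0
  else 0

/-!
Deleting `S` from `B` trades the boundary edges `e(S, V ∖ B)` for the new boundary `e(T, S)`, so
`φ(T) ≤ φ(B)` amounts to `φ(B) vol(S) ≤ e(S, V ∖ B) - e(T, S)`. Since `φ(S) ≥ (1 + ε) φ(B)`, the
left side is at most `(e(S, T) + e(S, V ∖ B)) / (1 + ε)`, and this is at most the right side exactly
when `e(S, T) + (1 + ε) e(T, S) ≤ ε e(S, V ∖ B)`, a condition that makes sense for directed graphs.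
On an undirected graph its left side is `(2 + ε) e(S, T)`, which for `ε ≤ 1` is at most
`3 e(S, T)`: hence the factor `ε / 3`.
-/

section CutWeight

variable {V : Type*} [DecidableEq V] {w : V → V → ℝ} {B C S T U : Finset V} {ε : ℝ}

lemma eW_eq_sum_of_disjoint (h : Disjoint S T) : eW w S T = ∑ u ∈ S, ∑ v ∈ T, w u v := by
  rw [eW, sdiff_eq_self_of_disjoint h.symm]

lemma eW_nonneg (hnonneg : ∀ u v, 0 ≤ w u v) : 0 ≤ eW w S T :=
  sum_nonneg fun u _ => sum_nonneg fun v _ => hnonneg u v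

lemma eW_comm_of_disjoint (hsym : ∀ u v, w u v = w v u) (h : Disjoint S T) :
    eW w S T = eW w T S := by
  rw [eW_eq_sum_of_disjoint h, eW_eq_sum_of_disjoint h.symm, sum_comm]
  simp only [hsym]

lemma eW_eq_eW_sdiff_add_eW_sdiff (hSB : S ⊆ B) (hBC : B ⊆ C) :
    eW w S C = eW w S (B \ S) + eW w S (C \ B) := by
  have hSC : Disjoint S (C \ B) := disjoint_sdiff.mono_left hSB
  have hBSC : Disjoint (B \ S) (C \ B) := disjoint_sdiff.mono_left sdiff_subset
  have hunion : C \ S = (B \ S) ∪ (C \ B) := by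
    rw [union_comm, sdiff_union_sdiff_cancel hBC hSB]
  rw [eW_eq_sum_of_disjoint disjoint_sdiff, eW_eq_sum_of_disjoint hSC, eW, hunion,
    ← sum_add_distrib]
  exact sum_congr rfl fun u _ => sum_union hBSC

lemma eW_sdiff_add_eW (hSB : S ⊆ B) (hBU : Disjoint B U) :
    eW w (B \ S) U + eW w S U = eW w B U := by
  rw [eW_eq_sum_of_disjoint hBU, eW_eq_sum_of_disjoint (hBU.mono_left hSB),
    eW_eq_sum_of_disjoint (hBU.mono_left sdiff_subset), sum_sdiff hSB]

lemma eW_sdiff_eq_sub (hSB : S ⊆ B) (hBC : B ⊆ C) :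
    eW w (B \ S) C = eW w B C - (eW w S (C \ B) - eW w (B \ S) S) := by
  have hT : eW w (B \ S) C = eW w (B \ S) S + eW w (B \ S) (C \ B) := by
    rw [eW_eq_eW_sdiff_add_eW_sdiff sdiff_subset hBC, Finset.sdiff_sdiff_eq_self hSB]
  have hB : eW w B C = eW w (B \ S) (C \ B) + eW w S (C \ B) := by
    rw [eW_sdiff_add_eW hSB disjoint_sdiff, eW, eW, Finset.sdiff_idem]
  linarith

lemma eW_add_mul_eW_le_of_le_third (hsym : ∀ u v, w u v = w v u) (hnonneg : ∀ u v, 0 ≤ w u v)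
    (hST : Disjoint S T) (hε : ε ≤ 1) (h : eW w S T ≤ ε / 3 * eW w S U) :
    eW w S T + (1 + ε) * eW w T S ≤ ε * eW w S U :=
  calc
    eW w S T + (1 + ε) * eW w T S = (2 + ε) * eW w S T := by
      rw [eW_comm_of_disjoint hsym hST]; ring
    _ ≤ 3 * eW w S T := mul_le_mul_of_nonneg_right (by linarith) (eW_nonneg hnonneg)
    _ ≤ ε * eW w S U := by linarith

end CutWeight

section Conductance

variable {V : Type*} [Fintype V] {w : V → V → ℝ} {B S : Finset V}

lemma vol_pos (hdeg : ∀ v, 0 < deg w v) (hS : S.Nonempty) : 0 < vol w S :=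
  sum_pos (fun v _ => hdeg v) hS

variable [DecidableEq V]

lemma vol_sdiff_add_vol (hSB : S ⊆ B) : vol w (B \ S) + vol w S = vol w B :=
  sum_sdiff hSB

lemma phi_sdiff_le_phi_iff (hSB : S ⊆ B) (hB : vol w B ≠ 0) (hT : 0 < vol w (B \ S)) :
    phi w (B \ S) ≤ phi w B ↔ phi w B * vol w S ≤ eW w S (univ \ B) - eW w (B \ S) S := by
  have hφB : phi w B * vol w (B \ S) = eW w B univ - phi w B * vol w S := by
    rw [eq_sub_iff_add_eq, ← mul_add, vol_sdiff_add_vol hSB]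
    exact div_mul_cancel₀ _ hB
  rw [phi.eq_def w (B \ S), div_le_iff₀ hT, eW_sdiff_eq_sub hSB (subset_univ B), hφB,
    sub_le_sub_iff_left]

theorem stmt7_general {ε : ℝ} (hε : -1 < ε) (hSB : S ⊆ B) (hS : 0 < vol w S)
    (hT : 0 < vol w (B \ S))
    (hcut : eW w S (B \ S) + (1 + ε) * eW w (B \ S) S ≤ ε * eW w S (univ \ B))
    (hφ : (1 + ε) * phi w B ≤ phi w S) :
    phi w (B \ S) ≤ phi w B := by
  have hB : 0 < vol w B := vol_sdiff_add_vol hSB ▸ add_pos hT hS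
  rw [phi_sdiff_le_phi_iff hSB hB.ne' hT]
  refine le_of_mul_le_mul_left ?_ (neg_lt_iff_pos_add'.mp hε)
  calc
    (1 + ε) * (phi w B * vol w S) = (1 + ε) * phi w B * vol w S := (mul_assoc _ _ _).symm
    _ ≤ eW w S univ := (le_div_iff₀ hS).mp hφ
    _ = eW w S (B \ S) + eW w S (univ \ B) := eW_eq_eW_sdiff_add_eW_sdiff hSB (subset_univ B)
    _ ≤ (1 + ε) * (eW w S (univ \ B) - eW w (B \ S) S) := by linarith

end Conductance

theorem stmt7 {V : Type*} [Fintype V] [DecidableEq V] (w : V → V → ℝ)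
    (hsym : ∀ u v, w u v = w v u) (hnonneg : ∀ u v, 0 ≤ w u v)
    (hdeg : ∀ v, 0 < deg w v)
    (ε : ℝ) (hε0 : 0 < ε) (hε1 : ε ≤ 1)
    (B S : Finset V) (hSB : S ⊆ B) (hSne : S.Nonempty) (hSpr : S ≠ B)
    (h1 : eW w S (B \ S) ≤ ε / 3 * eW w S (Finset.univ \ B))
    (h2 : (1 + ε) * phi w B ≤ phi w S) :
    phi w (B \ S) ≤ phi w B := by
  exact stmt7_general (by linarith) hSB (vol_pos hdeg hSne)
    (vol_pos hdeg (sdiff_nonempty.mpr (hSB.ssubset_of_ne hSpr).not_subset))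
    (eW_add_mul_eW_le_of_le_third hsym hnonneg disjoint_sdiff hε1 h1) h2
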